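/- Let n, p, m be positive natural numbers, θ ∈ ℝ^p, γ > 0, c₁, c₂, c₃ > 0, λ̄ > 0, T ≥ 0, and let Γ be a symmetric positive definite real p×p matrix with μ_min, μ_max the smallest and largest eigenvalues of Γ⁻¹; set η₁ := min(c₁, μ_min/2), η₂ := max(c₂, μ_max/2), and η₃ := min(γ·λ̄, c₁·c₃). Let V : ℝⁿ → ℝ be differentiable with gradient ∇V and satisfy c₁‖x‖² ≤ V(x) ≤ c₂‖x‖² for all x. Let f : ℝⁿ → ℝⁿ, Y : ℝⁿ → Matrix (Fin n) (Fin p) ℝ, g : ℝⁿ → Matrix (Fin n) (Fin m) ℝ, u : ℝ → ℝᵐ, and Λ : ℝ → Matrix (Fin p) (Fin p) ℝ with each Λ(t) symmetric positive semidefinite and, for all t ≥ T, ⟨v, Λ(t)·v⟩ ≥ λ̄·‖v‖² for every v ∈ ℝ^p. Suppose x : ℝ → ℝⁿ and θ̂ : ℝ → ℝ^p are differentiable with x'(t) = f(x(t)) + Y(x(t))·θ + g(x(t))·u(t) and θ̂'(t) = Γ·((Y(x(t)))ᵀ·∇V(x(t))) + γ·Γ·Λ(t)·(θ − θ̂(t))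 for all t ≥ 0, and that ⟨∇V(x(t)), f(x(t)) + Y(x(t))·θ̂(t) + g(x(t))·u(t)⟩ ≤ −c₃·V(x(t)) for all t ≥ 0. Then: (i) for all t ∈ [0, T], ‖x(t)‖² + ‖θ − θ̂(t)‖² ≤ (η₂/η₁)·(‖x(0)‖² + ‖θ − θ̂(0)‖²); and (ii) for all t ≥ T, √(‖x(t)‖² + ‖θ − θ̂(t)‖²) ≤ √(η₂/η₁) · √(‖x(T)‖² + ‖θ − θ̂(T)‖²) · exp( −(η₃/(2η₂))·(t − T) ). -/

import Mathlib

open scoped InnerProductSpace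

/-- The quadratic form of a Hermitian matrix in an orthonormal basis of eigenvectors. -/
lemma Matrix.IsHermitian.inner_toEuclideanLin_eq_sum {ι : Type*} [Fintype ι] [DecidableEq ι]
    {A : Matrix ι ι ℝ} (hA : A.IsHermitian) (v : EuclideanSpace ℝ ι) :
    ⟪v, Matrix.toEuclideanLin A v⟫_ℝ =
      ∑ i, hA.eigenvalues i * ⟪hA.eigenvectorBasis i, v⟫_ℝ ^ 2 := by
  rw [← hA.eigenvectorBasis.sum_inner_mul_inner]
  refine Finset.sum_congr rfl fun i _ => ?_
  have hsymm := (Matrix.isSymmetric_toEuclideanLin_iff.mpr hA) (hA.eigenvectorBasis i) v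
  have heig : Matrix.toEuclideanLin A (hA.eigenvectorBasis i) =
      hA.eigenvalues i • hA.eigenvectorBasis i := by
    apply (WithLp.ofLp_injective 2)
    simpa [Matrix.toLpLin_apply] using hA.mulVec_eigenvectorBasis i
  rw [← hsymm, heig, real_inner_smul_left, real_inner_comm]
  ring

lemma Matrix.IsHermitian.iInf_eigenvalues_mul_norm_sq_le {ι : Type*} [Fintype ι] [DecidableEq ι]
    {A : Matrix ι ι ℝ} (hA : A.IsHermitian) (v : EuclideanSpace ℝ ι) :
    (⨅ i, hA.eigenvalues i) * ‖v‖ ^ 2 ≤ ⟪v, Matrix.toEuclideanLin A v⟫_ℝ := by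
  rw [hA.inner_toEuclideanLin_eq_sum, ← hA.eigenvectorBasis.sum_sq_inner_right v, Finset.mul_sum]
  gcongr with i
  exact ciInf_le (Set.finite_range _).bddBelow i

lemma Matrix.IsHermitian.inner_le_iSup_eigenvalues_mul_norm_sq {ι : Type*} [Fintype ι]
    [DecidableEq ι] {A : Matrix ι ι ℝ} (hA : A.IsHermitian) (v : EuclideanSpace ℝ ι) :
    ⟪v, Matrix.toEuclideanLin A v⟫_ℝ ≤ (⨆ i, hA.eigenvalues i) * ‖v‖ ^ 2 := by
  rw [hA.inner_toEuclideanLin_eq_sum, ← hA.eigenvectorBasis.sum_sq_inner_right v, Finset.mul_sum]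
  gcongr with i
  exact le_ciSup (Set.finite_range _).bddAbove i

/-- Adjointness of a real matrix and its transpose for the Euclidean inner product. -/
lemma Matrix.inner_toEuclideanLin_transpose {ι κ : Type*} [Fintype ι] [Fintype κ]
    [DecidableEq ι] [DecidableEq κ] (A : Matrix ι κ ℝ) (v : EuclideanSpace ℝ κ)
    (w : EuclideanSpace ℝ ι) :
    ⟪v, Matrix.toEuclideanLin A.transpose w⟫_ℝ = ⟪w, Matrix.toEuclideanLin A v⟫_ℝ := by
  rw [← Matrix.conjTranspose_eq_transpose_of_trivial,
    Matrix.toEuclideanLin_conjTranspose_eq_adjoint, LinearMap.adjoint_inner_right,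
    real_inner_comm]

/-- Derivative of half the quadratic form of a symmetric matrix along a curve. -/
lemma Matrix.IsHermitian.hasDerivAt_half_inner {ι : Type*} [Fintype ι] [DecidableEq ι]
    {A : Matrix ι ι ℝ} (hA : A.IsHermitian) {e : ℝ → EuclideanSpace ℝ ι}
    {e' : EuclideanSpace ℝ ι} {t : ℝ} (he : HasDerivAt e e' t) :
    HasDerivAt (fun s => 1 / 2 * ⟪e s, Matrix.toEuclideanLin A (e s)⟫_ℝ)
      ⟪e t, Matrix.toEuclideanLin A e'⟫_ℝ t := by
  have hAe : HasDerivAt (fun s => Matrix.toEuclideanLin A (e s))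
      (Matrix.toEuclideanLin A e') t :=
    (LinearMap.toContinuousLinearMap (Matrix.toEuclideanLin A)).hasFDerivAt.comp_hasDerivAt t he
  refine ((he.inner ℝ hAe).const_mul (1 / 2 : ℝ)).congr_deriv ?_
  rw [← (Matrix.isSymmetric_toEuclideanLin_iff.mpr hA) e' (e t),
    real_inner_comm (e t) (Matrix.toEuclideanLin A e')]
  ring

/-- A differential inequality `W' ≤ -k W` on `[a, ∞)` yields exponential decay. -/
lemma le_mul_exp_of_hasDerivAt_le {W W' : ℝ → ℝ} {a k : ℝ}
    (hW : ∀ t, a ≤ t → HasDerivAt W (W' t) t) (hle : ∀ t, a ≤ t → W' t ≤ -k * W t)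
    {t : ℝ} (ht : a ≤ t) : W t ≤ W a * Real.exp (-k * (t - a)) := by
  have hd : ∀ s, a ≤ s → HasDerivAt (fun r => W r * Real.exp (k * (r - a)))
      (W' s * Real.exp (k * (s - a)) + W s * (Real.exp (k * (s - a)) * (k * 1))) s :=
    fun s hs => (hW s hs).mul ((((hasDerivAt_id s).sub_const a).const_mul k).exp)
  have hanti : AntitoneOn (fun r => W r * Real.exp (k * (r - a))) (Set.Ici a) := by
    refine antitoneOn_of_deriv_nonpos (convex_Ici a)
      (fun s hs => (hd s hs).continuousAt.continuousWithinAt)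
      (fun s hs => (hd s (interior_subset hs)).differentiableAt.differentiableWithinAt)
      fun s hs => ?_
    rw [(hd s (interior_subset hs)).deriv]
    nlinarith [hle s (interior_subset hs), Real.exp_pos (k * (s - a))]
  have h := hanti (Set.self_mem_Ici) ht ht
  simp only [sub_self, mul_zero, Real.exp_zero, mul_one] at h
  rw [neg_mul, Real.exp_neg, ← div_eq_mul_inv, le_div_iff₀ (Real.exp_pos _)]
  exact h

/-- Theorem 3 (exponential convergence under an ES-aCLF with sufficiently rich data):
the composite state `z = (x, θ - θ̂)` remains bounded on `[0, T]` and decays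
exponentially for `t ≥ T` as `‖z(t)‖ ≤ √(η₂/η₁) ‖z(T)‖ exp(-(η₃/(2η₂))(t - T))`,
where `η₁ = min{c₁, λ_min(Γ⁻¹)/2}`, `η₂ = max{c₂, λ_max(Γ⁻¹)/2}`,
`η₃ = min{γ λ̄, c₁ c₃}`. -/
theorem es_aclf_exponential_convergence
    (n p m : ℕ) (hn : 0 < n) (hp : 0 < p) (hm : 0 < m)
    (θ : EuclideanSpace ℝ (Fin p)) (γ : ℝ) (hγ : 0 < γ)
    (c₁ c₂ c₃ : ℝ) (hc₁ : 0 < c₁) (hc₂ : 0 < c₂) (hc₃ : 0 < c₃)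
    (lamBar : ℝ) (hlamBar : 0 < lamBar) (T : ℝ) (hT : 0 ≤ T)
    (Γ : Matrix (Fin p) (Fin p) ℝ) (hΓsymm : Γ.IsSymm) (hΓpd : Γ.PosDef)
    (hinv : (Γ⁻¹).IsHermitian)
    (μmin μmax η₁ η₂ η₃ : ℝ)
    (hμmin : μmin = ⨅ i, hinv.eigenvalues i)
    (hμmax : μmax = ⨆ i, hinv.eigenvalues i)
    (hη₁ : η₁ = min c₁ (μmin / 2))
    (hη₂ : η₂ = max c₂ (μmax / 2))
    (hη₃ : η₃ = min (γ * lamBar) (c₁ * c₃))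
    (V : EuclideanSpace ℝ (Fin n) → ℝ)
    (gradV : EuclideanSpace ℝ (Fin n) → EuclideanSpace ℝ (Fin n))
    (hV : ∀ y, HasGradientAt V (gradV y) y)
    (hVbound : ∀ x, c₁ * ‖x‖ ^ 2 ≤ V x ∧ V x ≤ c₂ * ‖x‖ ^ 2)
    (f : EuclideanSpace ℝ (Fin n) → EuclideanSpace ℝ (Fin n))
    (Y : EuclideanSpace ℝ (Fin n) → Matrix (Fin n) (Fin p) ℝ)
    (g : EuclideanSpace ℝ (Fin n) → Matrix (Fin n) (Fin m) ℝ)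
    (u : ℝ → EuclideanSpace ℝ (Fin m))
    (Λ : ℝ → Matrix (Fin p) (Fin p) ℝ)
    (hΛsymm : ∀ t, (Λ t).IsSymm)
    (hΛpsd : ∀ t, (Λ t).PosSemidef)
    (hexc : ∀ t, T ≤ t → ∀ v : EuclideanSpace ℝ (Fin p),
      lamBar * ‖v‖ ^ 2 ≤ ⟪v, Matrix.toEuclideanLin (Λ t) v⟫_ℝ)
    (x : ℝ → EuclideanSpace ℝ (Fin n))
    (θhat : ℝ → EuclideanSpace ℝ (Fin p))
    (hx : ∀ t, 0 ≤ t → HasDerivAt x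
      (f (x t) + Matrix.toEuclideanLin (Y (x t)) θ +
        Matrix.toEuclideanLin (g (x t)) (u t)) t)
    (hθhat : ∀ t, 0 ≤ t → HasDerivAt θhat
      (Matrix.toEuclideanLin Γ (Matrix.toEuclideanLin (Y (x t)).transpose (gradV (x t))) +
        γ • Matrix.toEuclideanLin Γ (Matrix.toEuclideanLin (Λ t) (θ - θhat t))) t)
    (hclf : ∀ t, 0 ≤ t →
      ⟪gradV (x t), f (x t) + Matrix.toEuclideanLin (Y (x t)) (θhat t) +
          Matrix.toEuclideanLin (g (x t)) (u t)⟫_ℝ ≤ -c₃ * V (x t)) :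
    (∀ t ∈ Set.Icc (0 : ℝ) T,
      ‖x t‖ ^ 2 + ‖θ - θhat t‖ ^ 2 ≤
        (η₂ / η₁) * (‖x 0‖ ^ 2 + ‖θ - θhat 0‖ ^ 2)) ∧
    (∀ t, T ≤ t →
      Real.sqrt (‖x t‖ ^ 2 + ‖θ - θhat t‖ ^ 2) ≤
        Real.sqrt (η₂ / η₁) * Real.sqrt (‖x T‖ ^ 2 + ‖θ - θhat T‖ ^ 2) *
          Real.exp (-(η₃ / (2 * η₂)) * (t - T))) := by
  have : Nonempty (Fin p) := ⟨⟨0, hp⟩⟩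
  have hμmin_pos : 0 < μmin := by
    obtain ⟨i, hi⟩ := exists_eq_ciInf_of_finite (f := hinv.eigenvalues)
    rw [hμmin, ← hi]
    exact hΓpd.inv.eigenvalues_pos i
  have hη₁_pos : 0 < η₁ := hη₁ ▸ lt_min hc₁ (half_pos hμmin_pos)
  have hη₂_pos : 0 < η₂ := hη₂ ▸ lt_max_of_lt_left hc₂
  have hη₃_pos : 0 < η₃ := hη₃ ▸ lt_min (mul_pos hγ hlamBar) (mul_pos hc₁ hc₃)
  have hη₁c : η₁ ≤ c₁ := hη₁ ▸ min_le_left _ _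
  have hη₁μ : η₁ ≤ μmin / 2 := hη₁ ▸ min_le_right _ _
  have hη₂c : c₂ ≤ η₂ := hη₂ ▸ le_max_left _ _
  have hη₂μ : μmax / 2 ≤ η₂ := hη₂ ▸ le_max_right _ _
  have hη₃γ : η₃ ≤ γ * lamBar := hη₃ ▸ min_le_left _ _
  have hη₃c : η₃ ≤ c₁ * c₃ := hη₃ ▸ min_le_right _ _
  set z : ℝ → ℝ := fun t => ‖x t‖ ^ 2 + ‖θ - θhat t‖ ^ 2 with hz
  set W : ℝ → ℝ := fun t =>
    V (x t) + 1 / 2 * ⟪θ - θhat t, Matrix.toEuclideanLin Γ⁻¹ (θ - θhat t)⟫_ℝ with hW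
  have hW_lower : ∀ t, η₁ * z t ≤ W t := fun t => by
    have hmin := hinv.iInf_eigenvalues_mul_norm_sq_le (θ - θhat t)
    rw [← hμmin] at hmin
    simp only [hz, hW]
    nlinarith [(hVbound (x t)).1, mul_le_mul_of_nonneg_right hη₁c (sq_nonneg ‖x t‖),
      mul_le_mul_of_nonneg_right hη₁μ (sq_nonneg ‖θ - θhat t‖)]
  have hW_upper : ∀ t, W t ≤ η₂ * z t := fun t => by
    have hmax := hinv.inner_le_iSup_eigenvalues_mul_norm_sq (θ - θhat t)
    rw [← hμmax] at hmax
    simp only [hz, hW]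
    nlinarith [(hVbound (x t)).2, mul_le_mul_of_nonneg_right hη₂c (sq_nonneg ‖x t‖),
      mul_le_mul_of_nonneg_right hη₂μ (sq_nonneg ‖θ - θhat t‖)]
  have hΓinv : ∀ w, Matrix.toEuclideanLin Γ⁻¹ (Matrix.toEuclideanLin Γ w) = w := fun w => by
    have hdet : IsUnit Γ.det := hΓpd.det_pos.ne'.isUnit
    simp [Matrix.toLpLin_apply, Matrix.mulVec_mulVec, Matrix.nonsing_inv_mul Γ hdet]
  have hW_deriv : ∀ t, 0 ≤ t → ∃ W', HasDerivAt W W' t ∧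
      W' ≤ -c₃ * V (x t) -
        γ * ⟪θ - θhat t, Matrix.toEuclideanLin (Λ t) (θ - θhat t)⟫_ℝ := fun t ht => by
    have hVx := (hV (x t)).hasFDerivAt.comp_hasDerivAt t (hx t ht)
    refine ⟨_, hVx.add (hinv.hasDerivAt_half_inner ((hθhat t ht).const_sub θ)), ?_⟩
    have hsplit : Matrix.toEuclideanLin (Y (x t)) θ =
        Matrix.toEuclideanLin (Y (x t)) (θhat t) +
          Matrix.toEuclideanLin (Y (x t)) (θ - θhat t) := by
      rw [← map_add, add_sub_cancel]
    have hdec := hclf t ht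
    simp only [InnerProductSpace.toDual_apply_apply, hsplit, map_neg, map_add, map_smul, hΓinv,
      inner_neg_right, inner_add_right, real_inner_smul_right,
      Matrix.inner_toEuclideanLin_transpose] at hdec ⊢
    linarith
  choose! W' hW' hW'_le using hW_deriv
  have hz_nonneg : ∀ t, 0 ≤ z t := fun t => by positivity
  constructor
  · intro t ht
    have hdecay := le_mul_exp_of_hasDerivAt_le (k := 0) hW' (fun s hs => ?_) ht.1
    · rw [div_mul_eq_mul_div, le_div_iff₀ hη₁_pos]
      simp only [neg_zero, zero_mul, Real.exp_zero, mul_one] at hdecay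
      change z t * η₁ ≤ η₂ * z 0
      linarith [hW_lower t, hW_upper 0]
    · have hΛ : 0 ≤ ⟪θ - θhat s, Matrix.toEuclideanLin (Λ s) (θ - θhat s)⟫_ℝ := by
        simpa [Matrix.toLpLin_apply, EuclideanSpace.inner_eq_star_dotProduct, dotProduct_comm]
          using (hΛpsd s).dotProduct_mulVec_nonneg (θ - θhat s).ofLp
      have hVs : 0 ≤ V (x s) := le_trans (by positivity) (hVbound (x s)).1
      linarith [hW'_le s hs, mul_nonneg hc₃.le hVs, mul_nonneg hγ.le hΛ]
  · intro t ht
    have hdecay := le_mul_exp_of_hasDerivAt_le (k := η₃ / η₂)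
      (fun s hs => hW' s (hT.trans hs)) (fun s hs => ?_) ht
    · have hexp : Real.exp (-(η₃ / (2 * η₂)) * (t - T)) =
          Real.sqrt (Real.exp (-(η₃ / η₂) * (t - T))) := by
        rw [← Real.exp_half]
        congr 1
        field_simp
      rw [hexp, ← Real.sqrt_mul (by positivity),
        ← Real.sqrt_mul (mul_nonneg (by positivity) (hz_nonneg T))]
      apply Real.sqrt_le_sqrt
      rw [div_mul_eq_mul_div, div_mul_eq_mul_div, le_div_iff₀ hη₁_pos]
      change z t * η₁ ≤ η₂ * z T * _
      calc z t * η₁ ≤ W t := by linarith [hW_lower t]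
        _ ≤ _ := hdecay
        _ ≤ _ := by gcongr; exact hW_upper T
    · have hrate : η₃ / η₂ * W s ≤ η₃ * z s := by
        rw [div_mul_eq_mul_div, div_le_iff₀ hη₂_pos]
        nlinarith [mul_le_mul_of_nonneg_left (hW_upper s) hη₃_pos.le]
      have hzs : η₃ * z s ≤ c₁ * c₃ * ‖x s‖ ^ 2 + γ * lamBar * ‖θ - θhat s‖ ^ 2 := by
        simp only [hz, mul_add]
        gcongr
      linarith [hW'_le s (hT.trans hs), mul_le_mul_of_nonneg_left (hVbound (x s)).1 hc₃.le,
        mul_le_mul_of_nonneg_left (hexc s hs (θ - θhat s)) hγ.le]
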